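/- Let λ > 0. There exist constants K₁, K₂ > 0 (depending only on λ) such that for every function ω̃ : [0,1] × [0,∞) → ℝ that is three times continuously differentiable in x and once continuously differentiable in t and satisfies ω̃_t + ω̃_x + ω̃_{xxx} + λ ω̃ = 0 on [0,1] × [0,∞) with ω̃(0,t) = 0, ω̃(1,t) = 0 and ω̃_x(1,t) = 0 for all t ≥ 0, one has for every t ≥ 0 both ‖ω̃_t(·,t)‖_{L²} ≤ K₁ ‖ω̃_{xxx}(·,t)‖_{L²} and ‖ω̃_{xxx}(·,t)‖_{L²} ≤ K₂ ‖ω̃_t(·,t)‖_{L²}. -/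

import Mathlib

/-!
Fix a time and write `u = w(·, t)`, so that `w_t = -A u` with `A u = u' + u''' + λ u`. Rolle's
theorem gives zeros of `u'` and of `u''`, hence the Poincaré inequality yields
`‖u‖ ≤ ‖u'‖ ≤ ‖u''‖ ≤ ‖u'''‖`, and the triangle inequality bounds `A u` by `u'''`.

For the converse it suffices to bound `u'` by `A u`. Pairing `A u` with the multiplier `x u` gives
Kato's smoothing identity `3 ‖u'‖² = ∫ (1 - 2 λ x) u² + 2 ∫ x u A u`. With `a = min 1 (1 + λ)` one
has `1 - 2 λ x ≤ 3 - 2 a` on `[0, 1]`, so `‖u‖ ≤ ‖u'‖` and Cauchy–Schwarz turn the identity into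
`a ‖u'‖ ≤ ‖A u‖`.
-/

open MeasureTheory

noncomputable section

/-- The `L²(0,1)` norm. -/
def L2norm (f : ℝ → ℝ) : ℝ := (∫ x in (0:ℝ)..1, f x ^ 2) ^ (1/2 : ℝ)

section

open Set

variable {f g u : ℝ → ℝ} {lam : ℝ}

lemma L2norm_nonneg (f : ℝ → ℝ) : 0 ≤ L2norm f :=
  Real.rpow_nonneg (intervalIntegral.integral_nonneg zero_le_one fun _ _ => sq_nonneg _) _

lemma sq_L2norm (f : ℝ → ℝ) : L2norm f ^ 2 = ∫ x in (0 : ℝ)..1, f x ^ 2 := by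
  rw [L2norm, ← Real.sqrt_eq_rpow, Real.sq_sqrt]
  exact intervalIntegral.integral_nonneg zero_le_one fun _ _ => sq_nonneg _

lemma L2norm_congr (h : EqOn f g (Icc 0 1)) : L2norm f = L2norm g := by
  rw [L2norm, L2norm, intervalIntegral.integral_congr]
  intro x hx
  simp only [h (uIcc_of_le (zero_le_one' ℝ) ▸ hx)]

lemma L2norm_neg (f : ℝ → ℝ) : L2norm (fun x => -f x) = L2norm f := by
  simp only [L2norm, neg_sq]

lemma L2norm_const_mul (c : ℝ) (f : ℝ → ℝ) : L2norm (fun x => c * f x) = |c| * L2norm f := by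
  simp_rw [L2norm, mul_pow, intervalIntegral.integral_const_mul, ← Real.sqrt_eq_rpow]
  rw [Real.sqrt_mul (sq_nonneg c), Real.sqrt_sq_eq_abs]

lemma L2norm_eq_lpNorm (hf : AEStronglyMeasurable f (volume.restrict (Ioc 0 1))) :
    L2norm f = lpNorm f 2 (volume.restrict (Ioc 0 1)) := by
  rw [lpNorm_eq_integral_norm_rpow_toReal two_ne_zero ENNReal.ofNat_ne_top hf, L2norm,
    intervalIntegral.integral_of_le zero_le_one]
  simp

lemma L2norm_add_le (hf : MemLp f 2 (volume.restrict (Ioc 0 1)))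
    (hg : MemLp g 2 (volume.restrict (Ioc 0 1))) :
    L2norm (fun x => f x + g x) ≤ L2norm f + L2norm g := by
  have hsum : L2norm (fun x => f x + g x) = lpNorm (f + g) 2 (volume.restrict (Ioc 0 1)) :=
    L2norm_eq_lpNorm (hf.1.add hg.1)
  rw [hsum, L2norm_eq_lpNorm hf.1, L2norm_eq_lpNorm hg.1]
  exact lpNorm_add_le hf one_le_two

lemma integral_abs_mul_abs_le_L2norm_mul_L2norm (hf : MemLp f 2 (volume.restrict (Ioc 0 1)))
    (hg : MemLp g 2 (volume.restrict (Ioc 0 1))) :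
    ∫ x in (0 : ℝ)..1, |f x| * |g x| ≤ L2norm f * L2norm g := by
  simpa [L2norm, intervalIntegral.integral_of_le] using
    integral_mul_norm_le_Lp_mul_Lq (f := f) (g := g) .two_two (by simpa using hf)
      (by simpa using hg)

lemma memLp_two_restrict_Ioc_of_continuous (hf : Continuous f) (a b : ℝ) :
    MemLp f 2 (volume.restrict (Ioc a b)) :=
  (memLp_two_iff_integrable_sq hf.aestronglyMeasurable).2 (hf.pow 2).integrableOn_Ioc

lemma abs_le_L2norm_deriv_of_eq_zero (hf : ∀ x ∈ Icc (0 : ℝ) 1, DifferentiableAt ℝ f x)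
    (hf' : MemLp (deriv f) 2 (volume.restrict (Ioc 0 1))) {d x : ℝ} (hd : d ∈ Icc (0 : ℝ) 1)
    (hfd : f d = 0) (hx : x ∈ Icc (0 : ℝ) 1) : |f x| ≤ L2norm (deriv f) := by
  have hint : IntervalIntegrable (deriv f) volume 0 1 :=
    (intervalIntegrable_iff_integrableOn_Ioc_of_le zero_le_one).2 (hf'.integrable one_le_two)
  have hsub : uIcc d x ⊆ uIcc 0 1 := uIcc_of_le (zero_le_one' ℝ) ▸ uIcc_subset_Icc hd hx
  have hftc : ∫ y in d..x, deriv f y = f x := by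
    rw [intervalIntegral.integral_deriv_eq_sub (fun y hy => hf y (uIcc_subset_Icc hd hx hy))
      (hint.mono_set hsub), hfd, sub_zero]
  calc |f x| = |∫ y in d..x, deriv f y| := by rw [hftc]
    _ ≤ |(∫ y in d..x, |deriv f y|)| := by
      simpa only [Real.norm_eq_abs] using
        intervalIntegral.norm_integral_le_abs_integral_norm (f := deriv f) (a := d) (b := x)
    _ ≤ |(∫ y in (0 : ℝ)..1, |deriv f y|)| :=
      intervalIntegral.abs_integral_mono_interval (uIoc_subset_uIoc_of_uIcc_subset_uIcc hsub)
        (.of_forall fun y => abs_nonneg _) hint.abs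
    _ = ∫ y in (0 : ℝ)..1, |deriv f y| * |1| := by
      rw [abs_of_nonneg (intervalIntegral.integral_nonneg zero_le_one fun y _ => abs_nonneg _)]
      simp only [abs_one, mul_one]
    _ ≤ L2norm (deriv f) * L2norm fun _ => 1 :=
      integral_abs_mul_abs_le_L2norm_mul_L2norm hf' (memLp_const 1)
    _ = L2norm (deriv f) := by simp [L2norm]

lemma L2norm_le_L2norm_deriv_of_eq_zero (hf : ∀ x ∈ Icc (0 : ℝ) 1, DifferentiableAt ℝ f x)
    (hf' : MemLp (deriv f) 2 (volume.restrict (Ioc 0 1))) {d : ℝ} (hd : d ∈ Icc (0 : ℝ) 1)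
    (hfd : f d = 0) : L2norm f ≤ L2norm (deriv f) := by
  have hfc : ContinuousOn f (uIcc 0 1) := fun x hx =>
    (hf x (uIcc_of_le (zero_le_one' ℝ) ▸ hx)).continuousAt.continuousWithinAt
  refine le_of_sq_le_sq ?_ (L2norm_nonneg _)
  calc L2norm f ^ 2 = ∫ x in (0 : ℝ)..1, f x ^ 2 := sq_L2norm f
    _ ≤ ∫ _ in (0 : ℝ)..1, L2norm (deriv f) ^ 2 :=
      intervalIntegral.integral_mono_on zero_le_one (hfc.pow 2).intervalIntegrable
        intervalIntegrable_const fun x hx =>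
          sq_le_sq.2 ((abs_le_L2norm_deriv_of_eq_zero hf hf' hd hfd hx).trans (le_abs_self _))
    _ = L2norm (deriv f) ^ 2 := by simp

lemma integral_sub_mul_mul_deriv_add_iteratedDeriv_three {a b : ℝ} (hu : ContDiff ℝ 3 u)
    (ha : u a = 0) (hb : u b = 0) (hb' : deriv u b = 0) :
    ∫ x in a..b, (x - a) * u x * (deriv u x + iteratedDeriv 3 u x) =
      3 / 2 * (∫ x in a..b, deriv u x ^ 2) - 1 / 2 * ∫ x in a..b, u x ^ 2 := by
  have hcu : Continuous u := hu.continuous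
  have hcu' : Continuous (deriv u) := hu.continuous_deriv (by norm_num)
  have hdu (x : ℝ) : HasDerivAt u (deriv u x) x := (hu.differentiable (by norm_num) x).hasDerivAt
  have hdu' (x : ℝ) : HasDerivAt (deriv u) (iteratedDeriv 2 u x) x := by
    simpa only [iteratedDeriv_succ, iteratedDeriv_zero] using
      (hu.differentiable_iteratedDeriv 1 (by norm_num) x).hasDerivAt
  have hdu'' (x : ℝ) : HasDerivAt (iteratedDeriv 2 u) (iteratedDeriv 3 u x) x := by
    simpa only [← iteratedDeriv_succ] using
      (hu.differentiable_iteratedDeriv 2 (by norm_num) x).hasDerivAt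
  -- `F = u u'' - u' ^ 2 / 2 + u ^ 2 / 2` is a primitive of `u (u' + u''')`. Integrating
  -- `(x - a) F'` by parts leaves `F = (u u')' - 3 / 2 * u' ^ 2 + u ^ 2 / 2`, hence the term `u u'`.
  have hprim (x : ℝ) : HasDerivAt
      (fun x => (x - a) * (u x * iteratedDeriv 2 u x - deriv u x ^ 2 / 2 + u x ^ 2 / 2)
        - u x * deriv u x)
      ((x - a) * u x * (deriv u x + iteratedDeriv 3 u x)
        - (3 / 2 * deriv u x ^ 2 - 1 / 2 * u x ^ 2)) x := by
    refine ((((hasDerivAt_id x).sub_const a).mul ((((hdu x).mul (hdu'' x)).sub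
      (((hdu' x).pow 2).div_const 2)).add (((hdu x).pow 2).div_const 2))).sub
      ((hdu x).mul (hdu' x))).congr_deriv ?_
    simp only [id, Pi.mul_apply, Pi.sub_apply, Pi.add_apply, Pi.pow_apply]
    ring
  have hzero := intervalIntegral.integral_eq_sub_of_hasDerivAt (a := a) (b := b)
    (fun x _ => hprim x) (Continuous.intervalIntegrable (by fun_prop) _ _)
  simp only [ha, hb, hb'] at hzero
  rw [intervalIntegral.integral_sub, intervalIntegral.integral_sub,
    intervalIntegral.integral_const_mul, intervalIntegral.integral_const_mul] at hzero
  · linarith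
  all_goals exact Continuous.intervalIntegrable (by fun_prop) _ _

/-- The spatial operator `A u = u' + u''' + λ u` of the damped linear Korteweg–de Vries equation
`w_t + A w = 0`. -/
def linearKdV (lam : ℝ) (u : ℝ → ℝ) (x : ℝ) : ℝ :=
  deriv u x + iteratedDeriv 3 u x + lam * u x

/-- The classical domain of `linearKdV` on `[0, 1]`: three times continuously differentiable
functions satisfying the boundary conditions. The functions are defined on all of `ℝ`, so that no
one-sided derivatives occur at the endpoints. -/
structure InKdVDomain (u : ℝ → ℝ) : Prop where
  contDiff : ContDiff ℝ 3 u
  left : u 0 = 0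
  right : u 1 = 0
  deriv_right : deriv u 1 = 0

namespace InKdVDomain

lemma continuous_deriv (hu : InKdVDomain u) : Continuous (deriv u) :=
  hu.contDiff.continuous_deriv (by norm_num)

lemma continuous_iteratedDeriv_three (hu : InKdVDomain u) : Continuous (iteratedDeriv 3 u) :=
  hu.contDiff.continuous_iteratedDeriv 3 le_rfl

lemma continuous_linearKdV (hu : InKdVDomain u) : Continuous (linearKdV lam u) :=
  (hu.continuous_deriv.add hu.continuous_iteratedDeriv_three).add
    (hu.contDiff.continuous.const_mul lam)

lemma L2norm_le_L2norm_deriv (hu : InKdVDomain u) : L2norm u ≤ L2norm (deriv u) :=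
  L2norm_le_L2norm_deriv_of_eq_zero (fun x _ => hu.contDiff.differentiable (by norm_num) x)
    (memLp_two_restrict_Ioc_of_continuous hu.continuous_deriv 0 1)
    (left_mem_Icc.2 zero_le_one) hu.left

lemma exists_iteratedDeriv_two_eq_zero (hu : InKdVDomain u) :
    ∃ x ∈ Icc (0 : ℝ) 1, iteratedDeriv 2 u x = 0 := by
  obtain ⟨c, hc, hc0⟩ := exists_deriv_eq_zero zero_lt_one hu.contDiff.continuous.continuousOn
    (hu.left.trans hu.right.symm)
  obtain ⟨d, hd, hd0⟩ := exists_deriv_eq_zero hc.2 hu.continuous_deriv.continuousOn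
    (hc0.trans hu.deriv_right.symm)
  refine ⟨d, ⟨(hc.1.trans hd.1).le, hd.2.le⟩, ?_⟩
  simpa only [iteratedDeriv_succ, iteratedDeriv_zero] using hd0

lemma L2norm_deriv_le_L2norm_iteratedDeriv_three (hu : InKdVDomain u) :
    L2norm (deriv u) ≤ L2norm (iteratedDeriv 3 u) := by
  have hu'' : iteratedDeriv 2 u = deriv (deriv u) := by
    simp only [iteratedDeriv_succ, iteratedDeriv_zero]
  have hu''' : iteratedDeriv 3 u = deriv (iteratedDeriv 2 u) := iteratedDeriv_succ
  obtain ⟨d, hd, hd0⟩ := hu.exists_iteratedDeriv_two_eq_zero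
  calc L2norm (deriv u) ≤ L2norm (iteratedDeriv 2 u) := by
        rw [hu'']
        refine L2norm_le_L2norm_deriv_of_eq_zero (d := 1) (fun x _ => ?_)
          (memLp_two_restrict_Ioc_of_continuous ?_ 0 1) (right_mem_Icc.2 zero_le_one) hu.deriv_right
        · simpa only [iteratedDeriv_one] using
            hu.contDiff.differentiable_iteratedDeriv 1 (by norm_num) x
        · exact hu'' ▸ hu.contDiff.continuous_iteratedDeriv 2 (by norm_num)
    _ ≤ L2norm (iteratedDeriv 3 u) := by
        rw [hu''']
        exact L2norm_le_L2norm_deriv_of_eq_zero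
          (fun x _ => hu.contDiff.differentiable_iteratedDeriv 2 (by norm_num) x)
          (memLp_two_restrict_Ioc_of_continuous (hu''' ▸ hu.continuous_iteratedDeriv_three) 0 1)
          hd hd0

lemma L2norm_linearKdV_le (hu : InKdVDomain u) (lam : ℝ) :
    L2norm (linearKdV lam u) ≤ (2 + |lam|) * L2norm (iteratedDeriv 3 u) := by
  have hmem {f : ℝ → ℝ} (hf : Continuous f) := memLp_two_restrict_Ioc_of_continuous hf 0 1
  have hderiv := hu.L2norm_deriv_le_L2norm_iteratedDeriv_three
  have hpoincare := hu.L2norm_le_L2norm_deriv.trans hderiv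
  calc L2norm (linearKdV lam u)
      ≤ L2norm (fun x => deriv u x + iteratedDeriv 3 u x) + L2norm (fun x => lam * u x) :=
        L2norm_add_le (hmem (hu.continuous_deriv.add hu.continuous_iteratedDeriv_three))
          (hmem (hu.contDiff.continuous.const_mul lam))
    _ ≤ L2norm (deriv u) + L2norm (iteratedDeriv 3 u) + |lam| * L2norm u := by
        rw [L2norm_const_mul]
        gcongr
        exact L2norm_add_le (hmem hu.continuous_deriv) (hmem hu.continuous_iteratedDeriv_three)
    _ ≤ L2norm (iteratedDeriv 3 u) + L2norm (iteratedDeriv 3 u)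
          + |lam| * L2norm (iteratedDeriv 3 u) := by gcongr
    _ = (2 + |lam|) * L2norm (iteratedDeriv 3 u) := by ring

lemma three_mul_sq_L2norm_deriv (hu : InKdVDomain u) (lam : ℝ) :
    3 * L2norm (deriv u) ^ 2 =
      ∫ x in (0 : ℝ)..1, ((1 - 2 * lam * x) * u x ^ 2 + 2 * (x * u x * linearKdV lam u x)) := by
  have hkato := integral_sub_mul_mul_deriv_add_iteratedDeriv_three hu.contDiff hu.left hu.right
    hu.deriv_right
  have hcu := hu.contDiff.continuous
  have hcu' := hu.continuous_deriv
  have hcu''' := hu.continuous_iteratedDeriv_three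
  have hsplit (x : ℝ) : (1 - 2 * lam * x) * u x ^ 2 + 2 * (x * u x * linearKdV lam u x) =
      2 * ((x - 0) * u x * (deriv u x + iteratedDeriv 3 u x)) + u x ^ 2 := by
    rw [linearKdV]; ring
  simp_rw [hsplit]
  rw [sq_L2norm, intervalIntegral.integral_add (Continuous.intervalIntegrable (by fun_prop) _ _)
    (Continuous.intervalIntegrable (by fun_prop) _ _), intervalIntegral.integral_const_mul, hkato]
  ring

lemma three_mul_sq_L2norm_deriv_le {a : ℝ} (hu : InKdVDomain u) (ha₁ : a ≤ 1) (ha₂ : a ≤ 1 + lam) :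
    3 * L2norm (deriv u) ^ 2 ≤
      (3 - 2 * a) * L2norm u ^ 2 + 2 * (L2norm u * L2norm (linearKdV lam u)) := by
  have hcu := hu.contDiff.continuous
  have hcA : Continuous (linearKdV lam u) := hu.continuous_linearKdV
  have hweight {x : ℝ} (hx : x ∈ Icc (0 : ℝ) 1) : 1 - 2 * lam * x ≤ 3 - 2 * a := by
    nlinarith [mul_nonneg hx.1 (sub_nonneg.2 ha₂),
      mul_nonneg (sub_nonneg.2 hx.2) (sub_nonneg.2 ha₁)]
  have hpair {x : ℝ} (hx : x ∈ Icc (0 : ℝ) 1) :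
      x * u x * linearKdV lam u x ≤ |u x| * |linearKdV lam u x| :=
    calc x * u x * linearKdV lam u x ≤ |x * u x * linearKdV lam u x| := le_abs_self _
      _ = x * (|u x| * |linearKdV lam u x|) := by
        rw [abs_mul, abs_mul, abs_of_nonneg hx.1, mul_assoc]
      _ ≤ |u x| * |linearKdV lam u x| := mul_le_of_le_one_left (by positivity) hx.2
  calc 3 * L2norm (deriv u) ^ 2
      = ∫ x in (0 : ℝ)..1, ((1 - 2 * lam * x) * u x ^ 2 + 2 * (x * u x * linearKdV lam u x)) :=
        hu.three_mul_sq_L2norm_deriv lam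
    _ ≤ ∫ x in (0 : ℝ)..1, ((3 - 2 * a) * u x ^ 2 + 2 * (|u x| * |linearKdV lam u x|)) := by
        refine intervalIntegral.integral_mono_on zero_le_one
          (Continuous.intervalIntegrable (by fun_prop) _ _)
          (Continuous.intervalIntegrable (by fun_prop) _ _) fun x hx => ?_
        gcongr ?_ * _ + 2 * ?_
        exacts [hweight hx, hpair hx]
    _ = (3 - 2 * a) * L2norm u ^ 2 + 2 * ∫ x in (0 : ℝ)..1, |u x| * |linearKdV lam u x| := by
        rw [sq_L2norm, intervalIntegral.integral_add
          (Continuous.intervalIntegrable (by fun_prop) _ _)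
          (Continuous.intervalIntegrable (by fun_prop) _ _),
          intervalIntegral.integral_const_mul, intervalIntegral.integral_const_mul]
    _ ≤ (3 - 2 * a) * L2norm u ^ 2 + 2 * (L2norm u * L2norm (linearKdV lam u)) := by
        gcongr
        exact integral_abs_mul_abs_le_L2norm_mul_L2norm
          (memLp_two_restrict_Ioc_of_continuous hcu 0 1)
          (memLp_two_restrict_Ioc_of_continuous hcA 0 1)

lemma min_mul_L2norm_deriv_le (hu : InKdVDomain u) (lam : ℝ) :
    min 1 (1 + lam) * L2norm (deriv u) ≤ L2norm (linearKdV lam u) := by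
  set a := min 1 (1 + lam)
  have ha₁ : a ≤ 1 := min_le_left _ _
  rcases (L2norm_nonneg (deriv u)).eq_or_lt with hzero | hpos
  · simpa only [← hzero, mul_zero] using L2norm_nonneg (linearKdV lam u)
  have hsq : 3 * L2norm (deriv u) ^ 2 ≤
      (3 - 2 * a) * L2norm (deriv u) ^ 2 + 2 * (L2norm (deriv u) * L2norm (linearKdV lam u)) := by
    have hA := L2norm_nonneg (linearKdV lam u)
    have hpoincare := L2norm_nonneg u
    have ha : 0 ≤ 3 - 2 * a := by linarith
    refine (hu.three_mul_sq_L2norm_deriv_le ha₁ (min_le_right _ _)).trans ?_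
    gcongr <;> exact hu.L2norm_le_L2norm_deriv
  refine le_of_mul_le_mul_left ?_ hpos
  linarith

lemma L2norm_iteratedDeriv_three_le (hu : InKdVDomain u) (hlam : -1 < lam) :
    L2norm (iteratedDeriv 3 u) ≤
      (1 + (1 + |lam|) / min 1 (1 + lam)) * L2norm (linearKdV lam u) := by
  have hmem {f : ℝ → ℝ} (hf : Continuous f) := memLp_two_restrict_Ioc_of_continuous hf 0 1
  have hcA : Continuous (linearKdV lam u) := hu.continuous_linearKdV
  have hcu : Continuous fun x => -lam * u x := hu.contDiff.continuous.const_mul (-lam)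
  have hderiv : L2norm (deriv u) ≤ L2norm (linearKdV lam u) / min 1 (1 + lam) := by
    rw [le_div_iff₀' (lt_min one_pos (by linarith))]
    exact hu.min_mul_L2norm_deriv_le lam
  calc L2norm (iteratedDeriv 3 u)
      = L2norm (fun x => linearKdV lam u x + (-deriv u x + -lam * u x)) := by
        congr 1 with x
        rw [linearKdV]; ring
    _ ≤ L2norm (linearKdV lam u) + L2norm (fun x => -deriv u x + -lam * u x) :=
        L2norm_add_le (hmem hcA) (hmem (hu.continuous_deriv.neg.add hcu))
    _ ≤ L2norm (linearKdV lam u)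
          + (L2norm (fun x => -deriv u x) + L2norm (fun x => -lam * u x)) := by
        gcongr
        exact L2norm_add_le (hmem hu.continuous_deriv.neg) (hmem hcu)
    _ = L2norm (linearKdV lam u) + (L2norm (deriv u) + |lam| * L2norm u) := by
        rw [L2norm_neg, L2norm_const_mul, abs_neg]
    _ ≤ L2norm (linearKdV lam u) + (L2norm (deriv u) + |lam| * L2norm (deriv u)) := by
        gcongr
        exact hu.L2norm_le_L2norm_deriv
    _ = L2norm (linearKdV lam u) + (1 + |lam|) * L2norm (deriv u) := by ring
    _ ≤ L2norm (linearKdV lam u)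
          + (1 + |lam|) * (L2norm (linearKdV lam u) / min 1 (1 + lam)) := by gcongr
    _ = (1 + (1 + |lam|) / min 1 (1 + lam)) * L2norm (linearKdV lam u) := by ring

end InKdVDomain

theorem time_derivative_norm_equivalence_general (lam : ℝ) (hlam : -1 < lam) :
    ∃ K₁ > (0 : ℝ), ∃ K₂ > (0 : ℝ), ∀ (w : ℝ → ℝ → ℝ) (t : ℝ), InKdVDomain (fun x => w x t) →
      (∀ x ∈ Icc (0 : ℝ) 1, HasDerivAt (fun t' => w x t') (-linearKdV lam (fun x' => w x' t) x) t) →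
      L2norm (fun x => deriv (fun t' => w x t') t) ≤
        K₁ * L2norm (iteratedDeriv 3 fun x => w x t) ∧
      L2norm (iteratedDeriv 3 fun x => w x t) ≤
        K₂ * L2norm (fun x => deriv (fun t' => w x t') t) := by
  have ha : 0 < min 1 (1 + lam) := lt_min one_pos (by linarith)
  refine ⟨2 + |lam|, by positivity, 1 + (1 + |lam|) / min 1 (1 + lam), by positivity,
    fun w t hu hw => ?_⟩
  have htime : L2norm (fun x => deriv (fun t' => w x t') t) =
      L2norm (linearKdV lam fun x => w x t) := by
    rw [L2norm_congr fun x hx => (hw x hx).deriv, L2norm_neg]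
  rw [htime]
  exact ⟨hu.L2norm_linearKdV_le lam, hu.L2norm_iteratedDeriv_three_le hlam⟩

end

/-- Norm equivalence: for solutions of the target system
`ω̃_t + ω̃_x + ω̃_xxx + lam ω̃ = 0` with homogeneous boundary conditions, the norms
`‖ω̃_t(·,t)‖_{L²}` and `‖ω̃_xxx(·,t)‖_{L²}` are equivalent. -/
theorem time_derivative_norm_equivalence (lam : ℝ) (hlam : 0 < lam) :
    ∃ K₁ > (0:ℝ), ∃ K₂ > (0:ℝ),
      ∀ w : ℝ → ℝ → ℝ,
        (∀ t : ℝ, ContDiff ℝ 3 fun x => w x t) →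
        (∀ x : ℝ, ContDiff ℝ 1 fun t => w x t) →
        (∀ x ∈ Set.Icc (0:ℝ) 1, ∀ t ≥ (0:ℝ),
          deriv (fun t' => w x t') t + deriv (fun x' => w x' t) x
            + iteratedDeriv 3 (fun x' => w x' t) x + lam * w x t = 0) →
        (∀ t ≥ (0:ℝ), w 0 t = 0) →
        (∀ t ≥ (0:ℝ), w 1 t = 0) →
        (∀ t ≥ (0:ℝ), deriv (fun x' => w x' t) 1 = 0) →
        ∀ t ≥ (0:ℝ),
          L2norm (fun x => deriv (fun t' => w x t') t) ≤
            K₁ * L2norm (fun x => iteratedDeriv 3 (fun x' => w x' t) x) ∧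
          L2norm (fun x => iteratedDeriv 3 (fun x' => w x' t) x) ≤
            K₂ * L2norm (fun x => deriv (fun t' => w x t') t) := by
  obtain ⟨K₁, hK₁, K₂, hK₂, hK⟩ := time_derivative_norm_equivalence_general lam (by linarith)
  refine ⟨K₁, hK₁, K₂, hK₂, fun w hx ht heq h0 h1 h1' t ht0 =>
    hK w t ⟨hx t, h0 t ht0, h1 t ht0, h1' t ht0⟩ fun x hx01 => ?_⟩
  have hdiff := ((ht x).differentiable one_ne_zero t).hasDerivAt
  exact hdiff.congr_deriv (by rw [linearKdV]; linarith [heq x hx01 t ht0])
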